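/- For every odd n ≥ 3, W^(1)[g_n] ≥ 2/π. Consequently, the sequence g_n does not provide a counterexample to the conjecture that every linear threshold function f satisfies W^(0)[f] + W^(1)[f] ≥ 2/π. -/

import Mathlib

open Finset

namespace BKS

/-- sign function: 1 if z ≥ 0, -1 otherwise. -/
noncomputable def sgn (z : ℝ) : ℝ := if 0 ≤ z then 1 else -1

/-- encode Bool as the ±1 value of a bit. -/
def chi (b : Bool) : ℝ := if b then 1 else -1

/-- Fourier coefficient of f at S. -/
noncomputable def fourierCoeff {n : ℕ} (f : (Fin n → Bool) → ℝ) (S : Finset (Fin n)) : ℝ :=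
  (1 / 2 ^ n : ℝ) * ∑ x : Fin n → Bool, f x * ∏ i ∈ S, chi (x i)

/-- Fourier weight of f at level k: W^(k)[f]. -/
noncomputable def fourierWeight {n : ℕ} (k : ℕ) (f : (Fin n → Bool) → ℝ) : ℝ :=
  ∑ S ∈ Finset.univ.filter (fun S : Finset (Fin n) => S.card = k), (fourierCoeff f S) ^ 2

/-- Noise stability of f at ρ. -/
noncomputable def noiseStab {n : ℕ} (ρ : ℝ) (f : (Fin n → Bool) → ℝ) : ℝ :=
  ∑ k ∈ Finset.range (n + 1), ρ ^ k * fourierWeight k f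

/-- Majority function on n bits. -/
noncomputable def Maj (n : ℕ) : (Fin n → Bool) → ℝ := fun x => sgn (∑ i, chi (x i))

/-- The function g_n(x) = sgn(2(x_1 + ⋯ + x_{n-3}) + x_{n-2} + x_{n-1} + x_n). -/
noncomputable def gfun (n : ℕ) : (Fin n → Bool) → ℝ :=
  fun x => sgn (∑ i : Fin n, (if (i : ℕ) < n - 3 then (2 : ℝ) else 1) * chi (x i))

/-- f is a linear threshold function. -/
def IsLTF {n : ℕ} (f : (Fin n → Bool) → ℝ) : Prop :=
  ∃ (w0 : ℝ) (w : Fin n → ℝ), ∀ x, f x = sgn (w0 + ∑ i, w i * chi (x i))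


lemma sum_cons {m : ℕ} (F : (Fin (m + 1) → Bool) → ℝ) :
    ∑ x, F x = ∑ x : Fin m → Bool, F (Fin.cons true x) + ∑ x : Fin m → Bool, F (Fin.cons false x) := by
  rw [← (Fin.consEquiv (fun _ => Bool)).sum_comp, Fintype.sum_prod_type, Fintype.sum_bool]
  rfl

/-- the sum of the signs -/
noncomputable def tot {m : ℕ} (x : Fin m → Bool) : ℝ := ∑ i, chi (x i)

lemma tot_cons {m : ℕ} (b : Bool) (x : Fin m → Bool) :
    tot (Fin.cons b x : Fin (m + 1) → Bool) = chi b + tot x := by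
  simp [tot, Fin.sum_univ_succ]

lemma tot_eq {m : ℕ} (x : Fin m → Bool) :
    tot x = 2 * ((univ.filter (fun i => x i = true)).card : ℝ) - m := by
  have h : ∀ i, chi (x i) = 2 * (if x i = true then (1 : ℝ) else 0) - 1 := by
    intro i
    unfold chi
    split_ifs <;> norm_num
  unfold tot
  simp_rw [h]
  rw [Finset.sum_sub_distrib, ← Finset.mul_sum, Finset.sum_boole]
  simp

lemma tot_int {m : ℕ} (x : Fin m → Bool) : ∃ z : ℤ, tot x = 2 * z - m :=
  ⟨(univ.filter (fun i => x i = true)).card, by rw [tot_eq]; simp⟩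

/-- number of balanced points -/
noncomputable def Z (m : ℕ) : ℝ := ∑ x : Fin m → Bool, if tot x = 0 then (1 : ℝ) else 0

noncomputable def A (m : ℕ) : ℝ := ∑ x : Fin m → Bool, |tot x|

lemma Z_odd (k : ℕ) : Z (2 * k + 1) = 0 := by
  unfold Z
  apply Finset.sum_eq_zero
  intro x _
  obtain ⟨z, hz⟩ := tot_int x
  rw [if_neg]
  intro h
  rw [h] at hz
  push_cast at hz
  have : (0 : ℤ) = 2 * z - (2 * k + 1) := by exact_mod_cast hz
  omega

lemma Z_even (k : ℕ) : Z (2 * k) = (k.centralBinom : ℝ) := by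
  unfold Z
  rw [Finset.sum_boole, Nat.centralBinom_eq_two_mul_choose]
  norm_cast
  have : (2 * k).choose k = (powersetCard k (univ : Finset (Fin (2 * k)))).card := by
    simp
  rw [this]
  refine Finset.card_bij' (fun x _ => univ.filter (fun i => x i = true)) (fun s _ i => decide (i ∈ s)) ?_ ?_ ?_ ?_
  · intro x hx
    simp only [mem_filter, mem_univ, true_and] at hx
    rw [tot_eq] at hx
    push_cast at hx
    rw [mem_powersetCard]
    refine ⟨subset_univ _, ?_⟩
    have : ((univ.filter (fun i => x i = true)).card : ℝ) = k := by linarith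
    exact_mod_cast this
  · intro s hs
    rw [mem_powersetCard] at hs
    simp only [mem_filter, mem_univ, true_and]
    rw [tot_eq]
    simp [hs.2]
  · intro x _
    ext i
    simp
  · intro s _
    ext i
    simp

lemma A_succ (m : ℕ) : A (m + 1) = 2 * A m + 2 * Z m := by
  unfold A Z
  rw [sum_cons, ← Finset.sum_add_distrib, Finset.mul_sum, Finset.mul_sum, ← Finset.sum_add_distrib]
  apply Finset.sum_congr rfl
  intro x _
  rw [tot_cons, tot_cons]
  obtain ⟨z, hz⟩ := tot_int x
  have hz' : tot x = ((2 * z - m : ℤ) : ℝ) := by rw [hz]; push_cast; ring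
  rw [hz']
  generalize 2 * z - (m : ℤ) = w
  simp only [chi, if_true, Int.cast_eq_zero]
  rcases lt_trichotomy w 0 with h | h | h
  · have h1 : (w : ℝ) ≤ -1 := by exact_mod_cast (by omega : w ≤ -1)
    rw [if_neg h.ne, abs_of_nonpos (by linarith), abs_of_nonpos (by simp; linarith), abs_of_nonpos (by linarith)]
    simp; ring
  · subst h; norm_num
  · have h1 : (1 : ℝ) ≤ w := by exact_mod_cast (by omega : 1 ≤ w)
    rw [if_neg h.ne', abs_of_nonneg (by linarith), abs_of_nonneg (by simp; linarith), abs_of_nonneg (by linarith)]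
    simp; ring

lemma A_even (k : ℕ) : A (2 * k) = 2 * k * (k.centralBinom : ℝ) := by
  induction k with
  | zero => simp [A, tot]
  | succ k ih =>
    rw [show 2 * (k + 1) = 2 * k + 1 + 1 by ring, A_succ, A_succ, Z_odd, Z_even, ih]
    have h : ((k : ℝ) + 1) * ((k + 1).centralBinom : ℝ) = 2 * (2 * k + 1) * k.centralBinom := by
      exact_mod_cast Nat.succ_mul_centralBinom_succ k
    push_cast
    linear_combination -2 * h

lemma sgn_pos' {z : ℝ} (h : 0 ≤ z) : sgn z = 1 := if_pos h
lemma sgn_neg' {z : ℝ} (h : z < 0) : sgn z = -1 := if_neg (not_le.2 h)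

lemma sum3 (F : ℝ → ℝ) : ∑ y : Fin 3 → Bool, F (tot y) = F 3 + 3 * F 1 + 3 * F (-1) + F (-3) := by
  rw [sum_cons, sum_cons, sum_cons, sum_cons, sum_cons, sum_cons, sum_cons]
  simp only [Fintype.sum_unique, tot_cons]
  have h0 : ∀ y : Fin 0 → Bool, tot y = 0 := by intro y; simp [tot]
  simp only [h0]
  norm_num [chi]
  ring

lemma head_pt (w : ℤ) : ∑ y : Fin 3 → Bool, sgn (2 * (2 * w) + tot y) * (2 * w) = 8 * |2 * (w : ℝ)| := by
  rw [sum3 (fun t => sgn (2 * (2 * w) + t) * (2 * w))]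
  rcases lt_trichotomy w 0 with h | h | h
  · have h1 : (w : ℝ) ≤ -1 := by exact_mod_cast (by omega : w ≤ -1)
    rw [sgn_neg' (by linarith), sgn_neg' (by linarith), sgn_neg' (by linarith), sgn_neg' (by linarith),
      abs_of_nonpos (by linarith)]
    ring
  · subst h; simp
  · have h1 : (1 : ℝ) ≤ w := by exact_mod_cast (by omega : 1 ≤ w)
    rw [sgn_pos' (by linarith), sgn_pos' (by linarith), sgn_pos' (by linarith), sgn_pos' (by linarith),
      abs_of_nonneg (by linarith)]
    ring

lemma tail_pt (w : ℤ) : ∑ y : Fin 3 → Bool, sgn (2 * (2 * w) + tot y) * tot y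
    = 12 * if 2 * (w : ℝ) = 0 then 1 else 0 := by
  rw [sum3 (fun t => sgn (2 * (2 * w) + t) * t)]
  rcases lt_trichotomy w 0 with h | h | h
  · have h1 : (w : ℝ) ≤ -1 := by exact_mod_cast (by omega : w ≤ -1)
    rw [sgn_neg' (by linarith), sgn_neg' (by linarith), sgn_neg' (by linarith), sgn_neg' (by linarith),
      if_neg (by linarith)]
    ring
  · subst h
    rw [sgn_pos' (by norm_num), sgn_pos' (by norm_num), sgn_neg' (by norm_num), sgn_neg' (by norm_num)]
    norm_num
  · have h1 : (1 : ℝ) ≤ w := by exact_mod_cast (by omega : 1 ≤ w)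
    rw [sgn_pos' (by linarith), sgn_pos' (by linarith), sgn_pos' (by linarith), sgn_pos' (by linarith),
      if_neg (by linarith)]
    ring

lemma sum_append {m : ℕ} (F : (Fin (m + 3) → Bool) → ℝ) :
    ∑ x, F x = ∑ x : Fin m → Bool, ∑ y : Fin 3 → Bool, F (Fin.append x y) := by
  rw [← (Fin.appendEquiv m 3).sum_comp, Fintype.sum_prod_type]
  rfl

lemma gfun_append {m : ℕ} (x : Fin m → Bool) (y : Fin 3 → Bool) :
    gfun (m + 3) (Fin.append x y) = sgn (2 * tot x + tot y) := by
  unfold gfun tot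
  rw [Fin.sum_univ_add, Finset.mul_sum]
  simp

lemma even_tot {k : ℕ} (x : Fin (2 * k) → Bool) : ∃ w : ℤ, tot x = 2 * w := by
  obtain ⟨z, hz⟩ := tot_int x
  exact ⟨z - k, by rw [hz]; push_cast; ring⟩

lemma head_sum (k : ℕ) : ∑ i : Fin (2 * k), fourierCoeff (gfun (2 * k + 3)) {Fin.castAdd 3 i}
    = 2 * k * (k.centralBinom / 4 ^ k) := by
  unfold fourierCoeff
  rw [← Finset.mul_sum, Finset.sum_comm]
  simp_rw [Finset.prod_singleton, ← Finset.mul_sum]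
  rw [sum_append]
  simp_rw [gfun_append, Fin.append_left]
  have : ∀ x : Fin (2 * k) → Bool, ∑ y : Fin 3 → Bool, sgn (2 * tot x + tot y) * ∑ i, chi (x i)
      = 8 * |tot x| := by
    intro x
    change ∑ y : Fin 3 → Bool, sgn (2 * tot x + tot y) * tot x = _
    obtain ⟨w, hw⟩ := even_tot x
    rw [hw]
    exact head_pt w
  simp_rw [this]
  rw [← Finset.mul_sum]
  change _ * (8 * A (2 * k)) = _
  rw [A_even, pow_add, pow_mul]
  norm_num
  field_simp

lemma tail_sum (k : ℕ) : ∑ i : Fin 3, fourierCoeff (gfun (2 * k + 3)) {Fin.natAdd (2 * k) i}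
    = 3 / 2 * (k.centralBinom / 4 ^ k) := by
  unfold fourierCoeff
  rw [← Finset.mul_sum, Finset.sum_comm]
  simp_rw [Finset.prod_singleton, ← Finset.mul_sum]
  rw [sum_append]
  simp_rw [gfun_append, Fin.append_right]
  have : ∀ x : Fin (2 * k) → Bool, ∑ y : Fin 3 → Bool, sgn (2 * tot x + tot y) * ∑ i, chi (y i)
      = 12 * if tot x = 0 then 1 else 0 := by
    intro x
    change ∑ y : Fin 3 → Bool, sgn (2 * tot x + tot y) * tot y = _
    obtain ⟨w, hw⟩ := even_tot x
    rw [hw]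
    exact tail_pt w
  simp_rw [this]
  rw [← Finset.mul_sum]
  change _ * (12 * Z (2 * k)) = _
  rw [Z_even, pow_add, pow_mul]
  norm_num
  field_simp
  ring

lemma weight_one {n : ℕ} (f : (Fin n → Bool) → ℝ) :
    fourierWeight 1 f = ∑ i, fourierCoeff f {i} ^ 2 := by
  unfold fourierWeight
  have : univ.filter (fun S : Finset (Fin n) => S.card = 1) = powersetCard 1 univ := by
    ext S; simp
  rw [this, Finset.powersetCard_one, Finset.sum_map]
  rfl

noncomputable def bseq (k : ℕ) : ℝ := ((k.centralBinom : ℝ) / 4 ^ k) ^ 2 * (2 * k + 3 / 4)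

lemma weight_ge (k : ℕ) : bseq k ≤ fourierWeight 1 (gfun (2 * k + 3)) := by
  rw [weight_one, Fin.sum_univ_add]
  have h1 := sq_sum_le_card_mul_sum_sq (s := univ)
    (f := fun i : Fin (2 * k) => fourierCoeff (gfun (2 * k + 3)) {Fin.castAdd 3 i})
  have h2 := sq_sum_le_card_mul_sum_sq (s := univ)
    (f := fun i : Fin 3 => fourierCoeff (gfun (2 * k + 3)) {Fin.natAdd (2 * k) i})
  rw [head_sum] at h1
  rw [tail_sum] at h2
  simp only [card_univ, Fintype.card_fin] at h1 h2
  have h0 : (0 : ℝ) ≤ ∑ i : Fin (2 * k), fourierCoeff (gfun (2 * k + 3)) {Fin.castAdd 3 i} ^ 2 :=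
    Finset.sum_nonneg (fun _ _ => sq_nonneg _)
  unfold bseq
  push_cast at h1 h2
  set p : ℝ := (k.centralBinom : ℝ) / 4 ^ k
  set S1 := ∑ i : Fin (2 * k), fourierCoeff (gfun (2 * k + 3)) {Fin.castAdd 3 i} ^ 2
  have h3 : 2 * k * p ^ 2 ≤ S1 := by
    rcases Nat.eq_zero_or_pos k with hk | hk
    · simpa [hk] using h0
    · have hk' : (0 : ℝ) < 2 * k := by positivity
      refine le_of_mul_le_mul_left ?_ hk'
      linarith
  linarith

lemma bseq_anti : Antitone bseq := by
  apply antitone_nat_of_succ_le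
  intro k
  have h : ((k : ℝ) + 1) * ((k + 1).centralBinom : ℝ) = 2 * (2 * k + 1) * k.centralBinom := by
    exact_mod_cast Nat.succ_mul_centralBinom_succ k
  have h' : ((k + 1).centralBinom : ℝ) / 4 ^ (k + 1)
      = (k.centralBinom / 4 ^ k) * ((2 * k + 1) / (2 * k + 2)) := by
    rw [pow_succ]
    field_simp
    linarith
  unfold bseq
  rw [h', mul_pow, mul_assoc]
  apply mul_le_mul_of_nonneg_left _ (sq_nonneg _)
  rw [div_pow, div_mul_eq_mul_div, div_le_iff₀ (by positivity)]
  push_cast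
  have : (0 : ℝ) ≤ k := by positivity
  nlinarith

lemma wallis_eq (k : ℕ) :
    ((k.centralBinom : ℝ) / 4 ^ k) ^ 2 * (2 * k + 1) = (Real.Wallis.W k)⁻¹ := by
  induction k with
  | zero => simp [Real.Wallis.W]
  | succ k ih =>
    have h : ((k : ℝ) + 1) * ((k + 1).centralBinom : ℝ) = 2 * (2 * k + 1) * k.centralBinom := by
      exact_mod_cast Nat.succ_mul_centralBinom_succ k
    have h' : ((k + 1).centralBinom : ℝ) / 4 ^ (k + 1)
        = (k.centralBinom / 4 ^ k) * ((2 * k + 1) / (2 * k + 2)) := by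
      rw [pow_succ]
      field_simp
      linarith
    rw [Real.Wallis.W_succ, mul_inv, ← ih, h']
    push_cast
    field_simp
    ring

lemma bseq_tendsto : Filter.Tendsto bseq Filter.atTop (nhds (2 / Real.pi)) := by
  have h1 : Filter.Tendsto (fun k => (Real.Wallis.W k)⁻¹) Filter.atTop (nhds (Real.pi / 2)⁻¹) :=
    Real.Wallis.tendsto_W_nhds_pi_div_two.inv₀ (by positivity)
  have h2 : Filter.Tendsto (fun k : ℕ => 1 - (1 / 8 : ℝ) * (1 / ((k : ℝ) + 1)) * (2 * (k + 1) / (2 * k + 1)))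
      Filter.atTop (nhds 1) := by
    have h3 : Filter.Tendsto (fun k : ℕ => (1 : ℝ) / ((k : ℝ) + 1)) Filter.atTop (nhds 0) :=
      tendsto_one_div_add_atTop_nhds_zero_nat
    have : Filter.Tendsto (fun k : ℕ => (1 / 8 : ℝ) * (1 / ((k : ℝ) + 1)) * (2 * (k + 1) / (2 * k + 1)))
        Filter.atTop (nhds 0) := by
      refine squeeze_zero (fun k => by positivity) (fun k => ?_) h3
      have : (2 * ((k : ℝ) + 1) / (2 * k + 1)) ≤ 2 := by
        rw [div_le_iff₀ (by positivity)]
        have : (0 : ℝ) ≤ k := by positivity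
        linarith
      have h4 : (0 : ℝ) ≤ 1 / ((k : ℝ) + 1) := by positivity
      nlinarith
    simpa using this.const_sub 1
  have h5 := h1.mul h2
  rw [inv_div, mul_one] at h5
  refine h5.congr (fun k => ?_)
  rw [← wallis_eq]
  unfold bseq
  field_simp
  ring

theorem stmt16 (n : ℕ) (hn : Odd n) (h3 : 3 ≤ n) :
    2 / Real.pi ≤ fourierWeight 1 (gfun n) ∧
    2 / Real.pi ≤ fourierWeight 0 (gfun n) + fourierWeight 1 (gfun n) := by
  obtain ⟨j, rfl⟩ := hn
  obtain ⟨k, rfl⟩ : ∃ k, j = k + 1 := ⟨j - 1, by omega⟩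
  have h : 2 / Real.pi ≤ fourierWeight 1 (gfun (2 * k + 3)) :=
    (bseq_anti.le_of_tendsto bseq_tendsto k).trans (weight_ge k)
  have h0 : 0 ≤ fourierWeight 0 (gfun (2 * k + 3)) := Finset.sum_nonneg (fun _ _ => sq_nonneg _)
  exact ⟨h, h.trans (le_add_of_nonneg_left h0)⟩

end BKS
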